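/- There exists a universal constant C > 0 (independent of the graph, the group, p and f) such that the following holds. Suppose V is finite, and let d₀ denote the diameter of (V, d), where d is the graph distance. Then for every real p with 1 ≤ p < ∞ and every f : V → ℝ with Σ_{m∈V} f(m) = 0 one has (Σ_{m∈V} |f(m)|^p)^{1/p} ≤ C · p · d₀ · (Σ_{m∈V} |∇f|(m)^p)^{1/p}. -/

import Mathlib

/-!
The inequality holds with `C = 1`, and even without the factor `p`. Let `A` be the (finite)
automorphism group. By transitivity the orbit average of a function `h` on `V` is the same along
every base point: `|V| ∑_{g ∈ A} h (g x) = |A| ∑_v h v` (`card_mul_sum_aut`). For a walk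
`x = v₀, …, v_k = y`, the triangle inequality along the translated walk `g v₀, …, g v_k` and
Minkowski's inequality in `ℓ^p(A)` give `‖g ↦ f (g x) - f (g y)‖_p ≤ k ‖g ↦ |∇f| (g x)‖_p`
(`walk_bound`). As `f` has mean zero, `f (g x)` is the average over `y` of `f (g x) - f (g y)`, and
the convexity of `t ↦ t ^ p` bounds its `ℓ^p(A)` norm by `d₀ ‖g ↦ |∇f| (g x)‖_p`. Converting the
sums over `A` back to sums over `V` yields the claim.
-/

open scoped BigOperators

/-- The (modulus of the) graph gradient: `|∇f|(m) = ∑_{n ∼ m} |f(m) - f(n)|`. -/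
noncomputable def gradAbs {V : Type} (G : SimpleGraph V) (f : V → ℝ) (m : V) : ℝ :=
  ∑ᶠ n ∈ G.neighborSet m, |f m - f n|

/-- The diameter of a graph with respect to the graph distance. -/
noncomputable def graphDiam {V : Type} (G : SimpleGraph V) : ℕ :=
  ⨆ m : V, ⨆ n : V, G.dist m n

section Aux

variable {V : Type} {G : SimpleGraph V}

lemma gradAbs_nonneg (f : V → ℝ) (m : V) : 0 ≤ gradAbs G f m :=
  finsum_nonneg fun _ => finsum_nonneg fun _ => abs_nonneg _

lemma abs_sub_le_gradAbs [Finite V] (f : V → ℝ) {m n : V} (h : G.Adj m n) :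
    |f m - f n| ≤ gradAbs G f m := by
  have hfin : (G.neighborSet m).Finite := Set.toFinite _
  rw [gradAbs, finsum_mem_eq_finite_toFinset_sum _ hfin]
  exact Finset.single_le_sum (f := fun n => |f m - f n|) (fun _ _ => abs_nonneg _)
    (by simpa using h)

lemma dist_le_graphDiam [Finite V] (m n : V) : G.dist m n ≤ graphDiam G :=
  (le_ciSup (f := fun n => G.dist m n) (Set.finite_range _).bddAbove n).trans
    (le_ciSup (f := fun m => ⨆ n : V, G.dist m n) (Set.finite_range _).bddAbove m)

/-- Right translation by an automorphism taking `y` to `x` shows that sums over the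
automorphism group do not see the base point. -/
lemma sum_aut_eq [Fintype (G ≃g G)] (htrans : ∀ u v : V, ∃ φ : G ≃g G, φ u = v)
    (h : V → ℝ) (x y : V) : ∑ g : G ≃g G, h (g x) = ∑ g : G ≃g G, h (g y) := by
  obtain ⟨φ, rfl⟩ := htrans y x
  exact Fintype.sum_equiv (Equiv.mulRight φ) _ _ fun g => rfl

lemma card_mul_sum_aut [Fintype V] [Fintype (G ≃g G)]
    (htrans : ∀ u v : V, ∃ φ : G ≃g G, φ u = v) (h : V → ℝ) (x : V) :
    (Fintype.card V : ℝ) * ∑ g : G ≃g G, h (g x) = Fintype.card (G ≃g G) * ∑ v, h v := by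
  have h1 : ∑ y : V, ∑ g : G ≃g G, h (g y) = (Fintype.card V : ℝ) * ∑ g : G ≃g G, h (g x) := by
    rw [Finset.sum_congr rfl fun y _ => sum_aut_eq htrans h y x]
    simp
  have h2 (g : G ≃g G) : ∑ y : V, h (g y) = ∑ v, h v := Equiv.sum_comp g.toEquiv h
  rw [← h1, Finset.sum_comm, Finset.sum_congr rfl fun g _ => h2 g]
  simp

/-- Each step of a walk contributes at most one copy of the `ℓ^p` norm of `|∇f|` along the
automorphism group; that norm may be taken at any fixed base point `z`. -/
lemma walk_bound [Finite V] [Fintype (G ≃g G)] (htrans : ∀ u v : V, ∃ φ : G ≃g G, φ u = v)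
    {p : ℝ} (hp : 1 ≤ p) (f : V → ℝ) (z : V) {x y : V} (w : G.Walk x y) :
    (∑ g : G ≃g G, |f (g x) - f (g y)| ^ p) ^ (1 / p) ≤
      w.length * (∑ g : G ≃g G, gradAbs G f (g z) ^ p) ^ (1 / p) := by
  have hp0 : 0 < p := by linarith
  induction w with
  | nil => simp [Real.zero_rpow hp0.ne', Real.zero_rpow (inv_ne_zero hp0.ne')]
  | @cons u v w huv q ih =>
    have hM := Real.Lp_add_le (Finset.univ : Finset (G ≃g G))
      (fun g => f (g u) - f (g v)) (fun g => f (g v) - f (g w)) hp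
    simp only [sub_add_sub_cancel] at hM
    have hstep : (∑ g : G ≃g G, |f (g u) - f (g v)| ^ p) ^ (1 / p) ≤
        (∑ g : G ≃g G, gradAbs G f (g z) ^ p) ^ (1 / p) := by
      rw [sum_aut_eq htrans (fun m => gradAbs G f m ^ p) z u]
      gcongr with g
      exact abs_sub_le_gradAbs f (g.map_adj_iff.2 huv)
    rw [SimpleGraph.Walk.length_cons]
    push_cast
    linarith

/-- The Poincaré inequality along a single orbit map `g ↦ g x`: mean zero lets `f (g x)` be replaced
by its differences with all `f (g y)`, which `walk_bound` controls along geodesics. -/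
lemma aut_bound [Fintype V] [Fintype (G ≃g G)] (hconn : G.Connected)
    (htrans : ∀ u v : V, ∃ φ : G ≃g G, φ u = v)
    {p : ℝ} (hp : 1 ≤ p) (f : V → ℝ) (hf : ∑ m, f m = 0) (x : V) :
    ∑ g : G ≃g G, |f (g x)| ^ p ≤
      (graphDiam G : ℝ) ^ p * ∑ g : G ≃g G, gradAbs G f (g x) ^ p := by
  have hp0 : 0 < p := by linarith
  have hN : (0 : ℝ) < Fintype.card V := by
    exact_mod_cast Fintype.card_pos_iff.2 ⟨x⟩
  have hS : 0 ≤ ∑ g : G ≃g G, gradAbs G f (g x) ^ p :=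
    Finset.sum_nonneg fun g _ => Real.rpow_nonneg (gradAbs_nonneg f _) _
  have hpair (y : V) : ∑ g : G ≃g G, |f (g x) - f (g y)| ^ p ≤
      (graphDiam G : ℝ) ^ p * ∑ g : G ≃g G, gradAbs G f (g x) ^ p := by
    obtain ⟨w, hw⟩ := hconn.exists_walk_length_eq_dist x y
    have hd : (w.length : ℝ) ≤ graphDiam G := by
      rw [hw]
      exact_mod_cast dist_le_graphDiam x y
    have h1 := (walk_bound htrans hp f x w).trans
      (mul_le_mul_of_nonneg_right hd (Real.rpow_nonneg hS _))
    have hL : 0 ≤ ∑ g : G ≃g G, |f (g x) - f (g y)| ^ p := by positivity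
    have h2 := Real.rpow_le_rpow (Real.rpow_nonneg hL _) h1 hp0.le
    rwa [Real.mul_rpow (by positivity) (Real.rpow_nonneg hS _), one_div,
      Real.rpow_inv_rpow hL hp0.ne', Real.rpow_inv_rpow hS hp0.ne'] at h2
  have hpoint (g : G ≃g G) : (Fintype.card V : ℝ) * |f (g x)| ^ p ≤
      ∑ y, |f (g x) - f (g y)| ^ p := by
    have hsum : ∑ y, (f (g x) - f (g y)) = Fintype.card V * f (g x) := by
      have : ∑ y, f (g y) = 0 := (Equiv.sum_comp g.toEquiv f).trans hf
      simp [Finset.sum_sub_distrib, this]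
    have h1 : (Fintype.card V : ℝ) * |f (g x)| ≤ ∑ y, |f (g x) - f (g y)| := by
      have := Finset.abs_sum_le_sum_abs (fun y => f (g x) - f (g y)) Finset.univ
      rwa [hsum, abs_mul, Nat.abs_cast] at this
    have h2 := (Real.rpow_le_rpow (by positivity) h1 hp0.le).trans
      (Real.rpow_sum_le_const_mul_sum_rpow Finset.univ (fun y => f (g x) - f (g y)) hp)
    rw [Real.mul_rpow hN.le (abs_nonneg _), Finset.card_univ] at h2
    have h3 : (Fintype.card V : ℝ) ^ p =
        (Fintype.card V : ℝ) ^ (p - 1) * Fintype.card V := by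
      rw [← Real.rpow_add_one hN.ne', sub_add_cancel]
    rw [h3, mul_assoc] at h2
    exact le_of_mul_le_mul_left h2 (Real.rpow_pos_of_pos hN _)
  refine le_of_mul_le_mul_left ?_ hN
  calc (Fintype.card V : ℝ) * ∑ g : G ≃g G, |f (g x)| ^ p
      ≤ ∑ g : G ≃g G, ∑ y, |f (g x) - f (g y)| ^ p := by
        rw [Finset.mul_sum]
        exact Finset.sum_le_sum fun g _ => hpoint g
    _ = ∑ y, ∑ g : G ≃g G, |f (g x) - f (g y)| ^ p := Finset.sum_comm
    _ ≤ ∑ _y : V, (graphDiam G : ℝ) ^ p * ∑ g : G ≃g G, gradAbs G f (g x) ^ p :=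
        Finset.sum_le_sum fun y _ => hpair y
    _ = _ := by simp

end Aux

/-- `L^p` Poincaré inequality (discrete, finite/compact case): there is a universal
constant `C > 0` such that on every connected, locally finite, vertex-transitive
graph with finite vertex set and diameter `d₀`, for every `1 ≤ p < ∞` and every
`f : V → ℝ` with zero mean,
`(∑_{m} |f(m)|^p)^{1/p} ≤ C p d₀ (∑_{m} |∇f|(m)^p)^{1/p}`. -/
theorem discrete_poincare_Lp :
    ∃ C : ℝ, 0 < C ∧
      ∀ (V : Type) (G : SimpleGraph V), Countable V → G.Connected →
        (∀ v : V, (G.neighborSet v).Finite) →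
        (∀ u v : V, ∃ φ : G ≃g G, φ u = v) →
        Finite V →
        ∀ p : ℝ, 1 ≤ p →
        ∀ f : V → ℝ, (∑ᶠ m, f m) = 0 →
          (∑ᶠ m, |f m| ^ p) ^ (1 / p) ≤
            C * p * (graphDiam G : ℝ) * (∑ᶠ m, (gradAbs G f m) ^ p) ^ (1 / p) := by
  refine ⟨1, one_pos, fun V G _ hconn _ htrans _ p hp f hf => ?_⟩
  classical
  have hp0 : 0 < p := by linarith
  have : Fintype V := Fintype.ofFinite V
  have : Finite (G ≃g G) := DFunLike.finite _
  have : Fintype (G ≃g G) := Fintype.ofFinite _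
  obtain ⟨x⟩ := hconn.nonempty
  rw [finsum_eq_sum_of_fintype] at hf
  rw [finsum_eq_sum_of_fintype, finsum_eq_sum_of_fintype]
  have hA : (0 : ℝ) < Fintype.card (G ≃g G) := by
    exact_mod_cast Fintype.card_pos
  have hV : ∑ m, |f m| ^ p ≤ (graphDiam G : ℝ) ^ p * ∑ m, gradAbs G f m ^ p := by
    have h := mul_le_mul_of_nonneg_left (aut_bound hconn htrans hp f hf x)
      (Nat.cast_nonneg (α := ℝ) (Fintype.card V))
    rw [mul_left_comm, card_mul_sum_aut htrans (fun m => |f m| ^ p),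
      card_mul_sum_aut htrans (fun m => gradAbs G f m ^ p), mul_left_comm] at h
    exact le_of_mul_le_mul_left h hA
  have hS : 0 ≤ ∑ m, gradAbs G f m ^ p :=
    Finset.sum_nonneg fun m _ => Real.rpow_nonneg (gradAbs_nonneg f m) _
  calc (∑ m, |f m| ^ p) ^ (1 / p)
      ≤ ((graphDiam G : ℝ) ^ p * ∑ m, gradAbs G f m ^ p) ^ (1 / p) :=
        Real.rpow_le_rpow (by positivity) hV (by positivity)
    _ = graphDiam G * (∑ m, gradAbs G f m ^ p) ^ (1 / p) := by
        rw [Real.mul_rpow (by positivity) hS, one_div,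
          Real.rpow_rpow_inv (Nat.cast_nonneg _) hp0.ne']
    _ ≤ 1 * p * graphDiam G * (∑ m, gradAbs G f m ^ p) ^ (1 / p) := by
        refine mul_le_mul_of_nonneg_right ?_ (Real.rpow_nonneg hS _)
        rw [one_mul]
        exact le_mul_of_one_le_left (Nat.cast_nonneg _) hp
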